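/- arXiv:2605.28012 — 2 statements merged into one kernel-verified Lean document; each statement's English description precedes it below -/
import Mathlib

section
/- For all integers N ≥ 0 and h ≥ 1, the Gaussian coefficient [2N+2h choose h-1] satisfies [2N+2h choose h-1] = Σ_{k=0}^{⌊(h-1)/2⌋} Σ_{j=k}^{h-k-1} q^{k(N+k+1) + j(N+j+1)} · [N+h choose j] · [j choose k] · [N+h-j choose h-j-k-1]. -/
open Finset

noncomputable section

/-- The variable `q`, as a rational function over `ℚ`. -/
def q : RatFunc ℚ := RatFunc.X

/-- The `q`-integer `[n] = (1 - q^n)/(1 - q)`. -/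
def qint (n : ℕ) : RatFunc ℚ := (1 - q ^ n) / (1 - q)

/-- The `q`-factorial `[n]! = [1][2]⋯[n]`, with `[0]! = 1`. -/
def qfact (n : ℕ) : RatFunc ℚ := ∏ i ∈ Finset.range n, qint (i + 1)

/-- The Gaussian (q-binomial) coefficient `[N choose K]`, equal to
`[N]!/([K]![N-K]!)` if `0 ≤ K ≤ N`, and `0` otherwise. -/
def qbinom (N K : ℤ) : RatFunc ℚ :=
  if 0 ≤ K ∧ K ≤ N then qfact N.toNat / (qfact K.toNat * qfact (N - K).toNat) else 0

/-!
With `s = N + h = (h - 1) + (N + 1)`, the `q`-Vandermonde convolution expands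
`[2s choose h-1]` as `∑ j, q^(j(N+1+j)) [s choose j] [s choose h-1-j]`. Splitting `s` once more as
`j + (s - j)`, the same convolution expands `[s choose h-1-j]` as
`∑ k, q^(k(N+1+k)) [j choose k] [s-j choose h-1-j-k]`. The two exponents have the same shape
because the second summand of the split upper index (`s`, then `s - j`) exceeds the lower index
being expanded (`h - 1`, then `h - 1 - j`) by `N + 1` both times.

Both expansions use only the `q`-Pascal rule and no division, so they hold with `q` replaced by any
element of a commutative semiring.
-/

/-- The Gaussian coefficient `[n choose k]` at an element `x` of a semiring, defined by the
`q`-Pascal rule so that it makes sense without division (in particular at roots of unity, and at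
`x = 1`, where it is `Nat.choose n k`). -/
def gaussBinom {R : Type*} [Semiring R] (x : R) : ℕ → ℕ → R
  | _, 0 => 1
  | 0, _ + 1 => 0
  | n + 1, k + 1 => gaussBinom x n k + x ^ (k + 1) * gaussBinom x n (k + 1)

section Semiring

variable {R : Type*} [Semiring R] (x : R)

@[simp]
theorem gaussBinom_zero_right (n : ℕ) : gaussBinom x n 0 = 1 := by
  cases n <;> rfl

@[simp]
theorem gaussBinom_zero_succ (k : ℕ) : gaussBinom x 0 (k + 1) = 0 := rfl

theorem gaussBinom_succ_succ (n k : ℕ) :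
    gaussBinom x (n + 1) (k + 1) = gaussBinom x n k + x ^ (k + 1) * gaussBinom x n (k + 1) := rfl

theorem gaussBinom_eq_zero_of_lt {n k : ℕ} (h : n < k) : gaussBinom x n k = 0 := by
  induction n generalizing k with
  | zero =>
    obtain ⟨k, rfl⟩ := Nat.exists_eq_add_of_lt h
    simp
  | succ n ih =>
    obtain ⟨k, rfl⟩ := Nat.exists_eq_succ_of_ne_zero (Nat.ne_zero_of_lt h)
    rw [Nat.succ_eq_add_one, gaussBinom_succ_succ, ih (by omega), ih (by omega), mul_zero, add_zero]

@[simp]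
theorem gaussBinom_self (n : ℕ) : gaussBinom x n n = 1 := by
  induction n with
  | zero => rfl
  | succ n ih =>
    rw [gaussBinom_succ_succ, ih, gaussBinom_eq_zero_of_lt x n.lt_succ_self, mul_zero, add_zero]

end Semiring

section CommSemiring

variable {R : Type*} [CommSemiring R] (x : R)

theorem gaussBinom_add_eq_sum_antidiagonal (m n r : ℕ) :
    gaussBinom x (m + n) r =
      ∑ p ∈ antidiagonal r,
        x ^ (p.1 * (n - p.2)) * gaussBinom x m p.1 * gaussBinom x n p.2 := by
  induction n generalizing r with
  | zero => cases r <;> simp [Nat.sum_antidiagonal_succ']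
  | succ n ih =>
    cases r with
    | zero => simp
    | succ r =>
      rw [← add_assoc, gaussBinom_succ_succ, ih, ih, Nat.sum_antidiagonal_succ',
        Nat.sum_antidiagonal_succ', mul_add, mul_sum, add_left_comm, ← sum_add_distrib]
      congr 1
      · simp only [gaussBinom_zero_right, Nat.sub_zero]
        ring
      · refine sum_congr rfl fun ⟨i, j⟩ hij => ?_
        obtain rfl : i + j = r := mem_antidiagonal.mp hij
        rw [gaussBinom_succ_succ]
        rcases lt_or_ge n (j + 1) with hn | hn
        · rw [gaussBinom_eq_zero_of_lt x hn]
          simp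
        · obtain ⟨d, rfl⟩ := Nat.exists_eq_add_of_le' hn
          have hgap : d + (j + 1) - j = d + 1 := by omega
          rw [Nat.add_sub_add_right, Nat.add_sub_cancel, hgap]
          ring

theorem gaussBinom_add_add_eq_sum_range (m d r : ℕ) :
    gaussBinom x (m + (d + r)) r =
      ∑ j ∈ range (r + 1),
        x ^ (j * (d + j)) * gaussBinom x m j * gaussBinom x (d + r) (r - j) := by
  rw [gaussBinom_add_eq_sum_antidiagonal,
    Nat.sum_antidiagonal_eq_sum_range_succ
      fun i j => x ^ (i * (d + r - j)) * gaussBinom x m i * gaussBinom x (d + r) j]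
  refine sum_congr rfl fun j hj => ?_
  rw [mem_range] at hj
  rw [show d + r - (r - j) = d + j by omega]

end CommSemiring

theorem sum_range_sum_range_sub_eq_sum_sum_Icc {M : Type*} [AddCommMonoid M] (f : ℕ → ℕ → M)
    (hf : ∀ j k, j < k → f j k = 0) (r : ℕ) :
    ∑ j ∈ range (r + 1), ∑ k ∈ range (r - j + 1), f j k =
      ∑ k ∈ range (r / 2 + 1), ∑ j ∈ Icc k (r - k), f j k := by
  have restrict_le (j : ℕ) :
      ∑ k ∈ range (r - j + 1), f j k = ∑ k ∈ range (r - j + 1) with k ≤ j, f j k :=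
    (sum_filter_of_ne fun k _ hk => not_lt.mp (mt (hf j k) hk)).symm
  simp only [restrict_le]
  refine sum_comm' fun j k => ?_
  simp only [mem_range, mem_filter, mem_Icc]
  omega

theorem double_expansion_general {R : Type*} [CommSemiring R] (x : R) (m d r : ℕ) :
    gaussBinom x (m + (d + r)) r =
      ∑ k ∈ range (r / 2 + 1), ∑ j ∈ Icc k (r - k),
        x ^ (k * (d + k) + j * (d + j)) * gaussBinom x m j * gaussBinom x j k *
          gaussBinom x (d + r - j) (r - j - k) := by
  rw [gaussBinom_add_add_eq_sum_range, ← sum_range_sum_range_sub_eq_sum_sum_Icc fun j k =>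
    x ^ (k * (d + k) + j * (d + j)) * gaussBinom x m j * gaussBinom x j k *
      gaussBinom x (d + r - j) (r - j - k)]
  · refine sum_congr rfl fun j hj => ?_
    have hjr : j ≤ r := Nat.lt_succ_iff.mp (mem_range.mp hj)
    have hsplit : d + r = j + (d + (r - j)) := by omega
    have hsub : d + r - j = d + (r - j) := Nat.add_sub_assoc hjr d
    rw [hsub, hsplit, gaussBinom_add_add_eq_sum_range, mul_sum]
    refine sum_congr rfl fun k _ => ?_
    ring
  · intro j k hjk
    rw [gaussBinom_eq_zero_of_lt x hjk, mul_zero, zero_mul]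

theorem transcendental_q : Transcendental ℚ q := by
  rw [q, ← RatFunc.algebraMap_X,
    transcendental_algebraMap_iff (RatFunc.algebraMap_injective ℚ)]
  exact Polynomial.transcendental_X ℚ

theorem q_pow_ne_one {n : ℕ} (hn : n ≠ 0) : q ^ n ≠ 1 := fun h =>
  transcendental_q.pow hn.bot_lt (h ▸ isAlgebraic_one)

theorem one_sub_q_ne_zero : 1 - q ≠ 0 :=
  sub_ne_zero.mpr fun h => q_pow_ne_one one_ne_zero (by rw [pow_one, h])

theorem qint_ne_zero {n : ℕ} (hn : n ≠ 0) : qint n ≠ 0 :=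
  div_ne_zero (sub_ne_zero.mpr (q_pow_ne_one hn).symm) one_sub_q_ne_zero

theorem qint_add (a b : ℕ) : qint (a + b) = qint a + q ^ a * qint b := by
  simp only [qint]
  ring

theorem qfact_zero : qfact 0 = 1 := prod_range_zero _

theorem qfact_succ (n : ℕ) : qfact (n + 1) = qfact n * qint (n + 1) := prod_range_succ _ _

theorem qfact_ne_zero (n : ℕ) : qfact n ≠ 0 :=
  prod_ne_zero_iff.mpr fun i _ => qint_ne_zero i.succ_ne_zero

theorem gaussBinom_q_add_mul_qfact_mul_qfact (k d : ℕ) :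
    gaussBinom q (k + d) k * qfact k * qfact d = qfact (k + d) := by
  induction k generalizing d with
  | zero => simp [qfact_zero]
  | succ k ihk =>
    induction d with
    | zero => simp [qfact_zero]
    | succ d ihd =>
      have hk := ihk (d + 1)
      rw [add_right_comm] at ihd
      rw [← add_assoc] at hk
      calc gaussBinom q (k + 1 + (d + 1)) (k + 1) * qfact (k + 1) * qfact (d + 1)
        _ = gaussBinom q (k + d + 1) k * qfact k * qfact (d + 1) * qint (k + 1) +
            q ^ (k + 1) *
              (gaussBinom q (k + d + 1) (k + 1) * qfact (k + 1) * qfact d * qint (d + 1)) := by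
          rw [← add_assoc, add_right_comm k 1 d, gaussBinom_succ_succ, qfact_succ k, qfact_succ d]
          ring
        _ = qfact (k + d + 1) * (qint (k + 1) + q ^ (k + 1) * qint (d + 1)) := by
          rw [hk, ihd]
          ring
        _ = qfact (k + 1 + (d + 1)) := by
          rw [← qint_add, ← add_assoc, add_right_comm k 1 d, qfact_succ (k + d + 1)]

theorem qbinom_natCast (n k : ℕ) : qbinom n k = gaussBinom q n k := by
  rcases lt_or_ge n k with h | h
  · rw [gaussBinom_eq_zero_of_lt q h, qbinom, if_neg (by omega)]
  · obtain ⟨d, rfl⟩ := Nat.exists_eq_add_of_le h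
    have hd : ((k + d : ℕ) - k : ℤ).toNat = d := by omega
    rw [qbinom, if_pos (by omega), hd, Int.toNat_natCast, Int.toNat_natCast,
      div_eq_iff (mul_ne_zero (qfact_ne_zero k) (qfact_ne_zero d)), ← mul_assoc,
      gaussBinom_q_add_mul_qfact_mul_qfact]

/-- For all integers `N ≥ 0` and `h ≥ 1`,
`[2N+2h choose h-1] = Σ_{k=0}^{⌊(h-1)/2⌋} Σ_{j=k}^{h-k-1}
  q^{k(N+k+1)+j(N+j+1)} [N+h choose j] [j choose k] [N+h-j choose h-j-k-1]`. -/
theorem double_expansion (N h : ℕ) (hh : 1 ≤ h) :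
    qbinom (2 * (N : ℤ) + 2 * h) ((h : ℤ) - 1) =
      ∑ k ∈ Finset.range ((h - 1) / 2 + 1), ∑ j ∈ Finset.Icc k (h - k - 1),
        q ^ (k * (N + k + 1) + j * (N + j + 1)) *
          qbinom ((N : ℤ) + h) (j : ℤ) * qbinom (j : ℤ) (k : ℤ) *
          qbinom ((N : ℤ) + h - j) ((h : ℤ) - j - k - 1) := by
  obtain ⟨r, rfl⟩ := Nat.exists_eq_add_of_le' hh
  have htop : 2 * (N : ℤ) + 2 * (r + 1 : ℕ) = (N + (r + 1) + (N + 1 + r) : ℕ) := by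
    push_cast
    ring
  have hbottom : ((r + 1 : ℕ) : ℤ) - 1 = (r : ℕ) := by omega
  rw [htop, hbottom, qbinom_natCast, double_expansion_general]
  refine sum_congr rfl fun k _ => sum_congr (by congr 1; omega) fun j hj => ?_
  obtain ⟨hkj, hjr⟩ := mem_Icc.mp hj
  have hupper : (N : ℤ) + (r + 1 : ℕ) - j = (N + 1 + r - j : ℕ) := by omega
  have hlower : ((r + 1 : ℕ) : ℤ) - j - k - 1 = (r - j - k : ℕ) := by omega
  rw [hupper, hlower, ← Nat.cast_add, qbinom_natCast, qbinom_natCast, qbinom_natCast,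
    add_right_comm N k 1, add_right_comm N j 1]

end
end

section
/- Let r ≥ 3, let ℓ, m_3, ..., m_r and n_1, ..., n_s be nonnegative integers with cyclic conventions, and let k be an integer with -ℓ ≤ k ≤ ℓ+1. Then the cyclic products satisfy C(m_3, ..., m_r; n; k) = ((q;q)_{ℓ-k+1} (q;q)_{ℓ+k} (q;q)_{m_r+m_3+1} / ((q;q)_{m_3+ℓ+1} (q;q)_{m_r+ℓ+1})) · C(ℓ, m_3, ..., m_r; n; k), where C(m_3, ..., m_r; n; k) is the cyclic product for the vector (m_3, ..., m_r) and C(ℓ, m_3, ..., m_r; n; k) is the cyclic product for the vector (ℓ, m_3, ..., m_r). -/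
open Finset

noncomputable section

/-- The `q`-Pochhammer symbol `(q;q)_n = (1-q)(1-q²)⋯(1-qⁿ)`, with `(q;q)_0 = 1`. -/
def qpoch (n : ℕ) : RatFunc ℚ := ∏ i ∈ Finset.range n, (1 - q ^ (i + 1))

/-- The cyclic product
`C(m_1, …, m_r; n; k) = Π_{i=1}^{r} [m_i+m_{i+1}+1 choose m_i+k]
  Π_{j=1}^{s} [n_j+n_{j+1} choose n_j+k]`,
where `(m_1, …, m_r)` and `(n_1, …, n_s)` are given as `m n : ℕ → ℕ`
on `0, …, r-1` and `0, …, s-1`, with cyclic successor `(i+1) % r`. -/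
def Cprod (r s : ℕ) (m n : ℕ → ℕ) (k : ℤ) : RatFunc ℚ :=
  (∏ i ∈ Finset.range r,
      qbinom ((m i : ℤ) + (m ((i + 1) % r) : ℤ) + 1) ((m i : ℤ) + k)) *
    ∏ j ∈ Finset.range s,
      qbinom ((n j : ℤ) + (n ((j + 1) % s) : ℤ)) ((n j : ℤ) + k)

/-!
Contracting `ℓ` out of the cycle changes only the factors next to it: with `a = m_r` and `b = m_3`,
the two factors for the pairs `(a, ℓ)` and `(ℓ, b)` become the single factor for `(a, b)`. Writing
`x = a + k`, `y = b + 1 - k`, `u = ℓ + k`, `v = ℓ - k + 1`, these factors are `[x+v choose x]`,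
`[u+y choose u]` and `[x+y choose x]`. Since `[x+y choose x] = (q;q)_{x+y} / ((q;q)_x (q;q)_y)`,
and likewise for the others, the symbols `(q;q)_x` and `(q;q)_y` cancel in the quotient. If `x` or
`y` is negative, both sides vanish.
-/

theorem ratFunc_X_pow_ne_one {K : Type*} [Field K] {n : ℕ} (hn : n ≠ 0) :
    (RatFunc.X : RatFunc K) ^ n ≠ 1 := fun h =>
  RatFunc.transcendental_X.pow (Nat.pos_of_ne_zero hn) (h ▸ isAlgebraic_one)

theorem one_sub_q_pow_ne_zero {n : ℕ} (hn : n ≠ 0) : 1 - q ^ n ≠ 0 :=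
  sub_ne_zero.mpr (ratFunc_X_pow_ne_one hn).symm

theorem qpoch_ne_zero (n : ℕ) : qpoch n ≠ 0 :=
  prod_ne_zero_iff.mpr fun i _ => one_sub_q_pow_ne_zero i.succ_ne_zero

theorem qfact_eq_qpoch_div (n : ℕ) : qfact n = qpoch n / (1 - q) ^ n := by
  simp only [qfact, qpoch, qint, prod_div_distrib, prod_const, card_range]

theorem qbinom_add_eq_qpoch_div (i j : ℕ) :
    qbinom (i + j) i = qpoch (i + j) / (qpoch i * qpoch j) := by
  have hq : 1 - q ≠ 0 := by simpa only [pow_one] using one_sub_q_pow_ne_zero one_ne_zero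
  calc qbinom (i + j) i = qfact (i + j) / (qfact i * qfact j) := by
        rw [qbinom, if_pos (by lia), add_sub_cancel_left, ← Nat.cast_add]
        simp only [Int.toNat_natCast]
    _ = qpoch (i + j) / (qpoch i * qpoch j) := by
        simp only [qfact_eq_qpoch_div, pow_add]
        field_simp

theorem qbinom_add_eq_zero {x y : ℤ} (h : x < 0 ∨ y < 0) : qbinom (x + y) x = 0 :=
  if_neg (by lia)

theorem qbinom_add_eq_qpoch_mul_qbinom_mul_qbinom (x y : ℤ) {u v : ℤ} (hu : 0 ≤ u) (hv : 0 ≤ v) :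
    qbinom (x + y) x =
      qpoch v.toNat * qpoch u.toNat * qpoch (x + y).toNat /
          (qpoch (y + u).toNat * qpoch (x + v).toNat) *
        (qbinom (u + y) u * qbinom (x + v) x) := by
  rcases lt_or_ge x 0 with hx | hx
  · rw [qbinom_add_eq_zero (.inl hx), qbinom_add_eq_zero (.inl hx), mul_zero, mul_zero]
  rcases lt_or_ge y 0 with hy | hy
  · rw [qbinom_add_eq_zero (.inr hy), qbinom_add_eq_zero (.inr hy), zero_mul, mul_zero]
  lift x to ℕ using hx
  lift y to ℕ using hy
  lift u to ℕ using hu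
  lift v to ℕ using hv
  simp only [qbinom_add_eq_qpoch_div]
  simp only [← Nat.cast_add, Int.toNat_natCast, add_comm y u]
  field_simp [qpoch_ne_zero]

theorem qbinom_contract (a b : ℕ) {ℓ : ℕ} {k : ℤ} (hk1 : -(ℓ : ℤ) ≤ k) (hk2 : k ≤ (ℓ : ℤ) + 1) :
    qbinom ((a : ℤ) + b + 1) (a + k) =
      (qpoch ((ℓ : ℤ) - k + 1).toNat * qpoch ((ℓ : ℤ) + k).toNat * qpoch (a + b + 1)) /
          (qpoch (b + ℓ + 1) * qpoch (a + ℓ + 1)) *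
        (qbinom ((ℓ : ℤ) + b + 1) (ℓ + k) * qbinom ((a : ℤ) + ℓ + 1) (a + k)) := by
  have hab : (a : ℤ) + k + (b + 1 - k) = a + b + 1 := by ring
  have hℓb : (ℓ : ℤ) + k + (b + 1 - k) = ℓ + b + 1 := by ring
  have hbℓ : (b : ℤ) + 1 - k + (ℓ + k) = b + ℓ + 1 := by ring
  have haℓ : (a : ℤ) + k + (ℓ - k + 1) = a + ℓ + 1 := by ring
  have h := qbinom_add_eq_qpoch_mul_qbinom_mul_qbinom (a + k) (b + 1 - k)
    (show 0 ≤ (ℓ : ℤ) + k by lia) (show 0 ≤ (ℓ : ℤ) - k + 1 by lia)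
  rw [hab, hℓb, hbℓ, haℓ] at h
  exact_mod_cast h

section CyclicProducts

variable {M : Type*} [CommMonoid M]

theorem prod_range_succ_cyclic (f : ℕ → ℕ → M) (t : ℕ) :
    ∏ i ∈ range (t + 1), f i ((i + 1) % (t + 1)) = (∏ i ∈ range t, f i (i + 1)) * f t 0 := by
  rw [prod_range_succ, Nat.mod_self]
  congr 1
  refine prod_congr rfl fun i hi => ?_
  rw [Nat.mod_eq_of_lt (Nat.succ_lt_succ (mem_range.mp hi))]

theorem prod_cyclic_tail_eq_mul {α : Type*} (w : α → α → M) (m : ℕ → α) (t : ℕ) {c : M}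
    (hc : w (m (t + 1)) (m 1) = c * (w (m 0) (m 1) * w (m (t + 1)) (m 0))) :
    ∏ i ∈ range (t + 1), w (m (i + 1)) (m ((i + 1) % (t + 1) + 1)) =
      c * ∏ i ∈ range (t + 2), w (m i) (m ((i + 1) % (t + 2))) := by
  let P := ∏ i ∈ range t, w (m (i + 1)) (m (i + 2))
  calc ∏ i ∈ range (t + 1), w (m (i + 1)) (m ((i + 1) % (t + 1) + 1))
      = P * w (m (t + 1)) (m 1) :=
        prod_range_succ_cyclic (fun i j => w (m (i + 1)) (m (j + 1))) t
    _ = c * (P * w (m 0) (m 1) * w (m (t + 1)) (m 0)) := by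
        rw [hc, mul_left_comm, mul_assoc]
    _ = c * ∏ i ∈ range (t + 2), w (m i) (m ((i + 1) % (t + 2))) := by
        rw [prod_range_succ_cyclic (fun i j => w (m i) (m j)), prod_range_succ']

end CyclicProducts

/-- Recombination of cyclic products: for `r ≥ 3`, nonnegative `ℓ`,
`m_3, …, m_r`, `n_1, …, n_s`, and an integer `k` with `-ℓ ≤ k ≤ ℓ+1`,
`C(m_3, …, m_r; n; k)
  = ((q;q)_{ℓ-k+1} (q;q)_{ℓ+k} (q;q)_{m_r+m_3+1} /
      ((q;q)_{m_3+ℓ+1} (q;q)_{m_r+ℓ+1})) C(ℓ, m_3, …, m_r; n; k)`.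
Here `m_3, …, m_r` are `m 2, …, m (r-1)`, so the vector `(m_3, …, m_r)` is
`fun i => m (i + 2)` of length `r - 2` and `(ℓ, m_3, …, m_r)` is
`fun i => if i = 0 then ℓ else m (i + 1)` of length `r - 1`. -/
theorem Cprod_recombine (r s : ℕ) (hr : 3 ≤ r) (ℓ : ℕ) (m n : ℕ → ℕ) (k : ℤ)
    (hk1 : -(ℓ : ℤ) ≤ k) (hk2 : k ≤ (ℓ : ℤ) + 1) :
    Cprod (r - 2) s (fun i => m (i + 2)) n k =
      (qpoch ((ℓ : ℤ) - k + 1).toNat * qpoch ((ℓ : ℤ) + k).toNat *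
          qpoch (m (r - 1) + m 2 + 1)) /
          (qpoch (m 2 + ℓ + 1) * qpoch (m (r - 1) + ℓ + 1)) *
        Cprod (r - 1) s (fun i => if i = 0 then ℓ else m (i + 1)) n k := by
  obtain ⟨t, rfl⟩ : ∃ t, r = t + 3 := Nat.exists_eq_add_of_le' hr
  have hprod := prod_cyclic_tail_eq_mul
    (fun a b : ℕ => qbinom ((a : ℤ) + b + 1) (a + k)) (fun i => if i = 0 then ℓ else m (i + 1)) t
    (qbinom_contract (m (t + 2)) (m 2) hk1 hk2)
  unfold Cprod
  rw [← mul_assoc]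
  exact congrArg (· * _) hprod

end
end
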